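/- arXiv:0801.2109 — 3 statements merged into one kernel-verified Lean document; each statement's English description precedes it below -/
import Mathlib

section
/- Let C = {(x, y) ∈ ℝ² : y² = x³} (the zero set of f(x, y) = y² − x³) and, for ε > 0, let U_ε = {(x, y) ∈ ℝ² : |y² − x³| ≤ ε}. Then for every ε > 0 there is no Lipschitz retraction of U_ε onto C; that is, there is no constant K ≥ 0 and no map r : U_ε → ℝ² such that r is K-Lipschitz on U_ε (with respect to the Euclidean distance), r(U_ε) ⊆ C, and r(p) = p for every p ∈ C. -/
/-!
Suppose `r` is a `K`-Lipschitz retraction. For small `t > 0` the vertical segment joining the two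
points `(t², ±t³)` of the curve lies in the neighbourhood. Along it the second coordinate of `r` is
continuous and runs from `-t³` to `t³`, so it vanishes at some point; the only point of the curve
with vanishing second coordinate is the origin. Hence the origin is within `K · 2t³` of
`r (t², t³) = (t², t³)`, although their distance is at least `t²`. This fails once `2Kt < 1`.
-/

/-- The cuspidal cubic `y² = x³` in `ℝ²`. -/
def cuspCurve : Set (EuclideanSpace ℝ (Fin 2)) :=
  {p | (p 1) ^ 2 = (p 0) ^ 3}

/-- The set `|y² - x³| ≤ ε` in `ℝ²`. -/
def cuspNbhd (ε : ℝ) : Set (EuclideanSpace ℝ (Fin 2)) :=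
  {p | |(p 1) ^ 2 - (p 0) ^ 3| ≤ ε}

theorem abs_coord_sub_le_dist (p q : EuclideanSpace ℝ (Fin 2)) (i : Fin 2) :
    |p i - q i| ≤ dist p q := by
  rw [dist_eq_norm, ← Real.norm_eq_abs]
  exact PiLp.norm_apply_le (p - q) i

theorem dist_vertical (x s s' : ℝ) :
    dist (!₂[x, s] : EuclideanSpace ℝ (Fin 2)) !₂[x, s'] = |s - s'| := by
  simp [EuclideanSpace.dist_eq, Real.dist_eq, Real.sqrt_sq_eq_abs]

/-- For every `ε > 0` there is no Lipschitz retraction of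
`{|y² - x³| ≤ ε}` onto the curve `{y² = x³}`. -/
theorem stmt_3 (ε : ℝ) (hε : 0 < ε) :
    ¬ ∃ (K : ℝ) (r : EuclideanSpace ℝ (Fin 2) → EuclideanSpace ℝ (Fin 2)),
        0 ≤ K ∧
        (∀ p ∈ cuspNbhd ε, ∀ q ∈ cuspNbhd ε, dist (r p) (r q) ≤ K * dist p q) ∧
        (∀ p ∈ cuspNbhd ε, r p ∈ cuspCurve) ∧
        (∀ p ∈ cuspCurve, r p = p) := by
  rintro ⟨K, r, hK, hlip, hmem, hfix⟩
  -- The conditions needed on `t` are `t ^ 6 ≤ ε` and `2 * K * t < 1`.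
  obtain ⟨t, ht0, ht1, htε, htK⟩ : ∃ t : ℝ, 0 < t ∧ t ≤ 1 ∧ t ≤ ε ∧ 2 * K * t < 1 := by
    have hm : 0 < min 1 ε := lt_min one_pos hε
    have hd : 0 < 2 * K + 1 := by linarith
    have hle : min 1 ε / (2 * K + 1) ≤ min 1 ε := div_le_self hm.le (by linarith)
    refine ⟨min 1 ε / (2 * K + 1), div_pos hm hd, hle.trans (min_le_left _ _),
      hle.trans (min_le_right _ _), ?_⟩
    rw [← mul_div_assoc, div_lt_one hd]
    have := mul_le_mul_of_nonneg_left (min_le_left 1 ε) (by linarith : 0 ≤ 2 * K)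
    linarith
  have ht3 : 0 < t ^ 3 := by positivity
  have ht6 : t ^ 6 ≤ ε := (pow_le_of_le_one ht0.le ht1 (by norm_num)).trans htε
  have hseg : ∀ s ∈ Set.Icc (-t ^ 3) (t ^ 3), !₂[t ^ 2, s] ∈ cuspNbhd ε := by
    rintro s ⟨h1, h2⟩
    have hs : s ^ 2 ≤ (t ^ 3) ^ 2 := sq_le_sq' (by linarith) h2
    have h6 : (t ^ 2) ^ 3 = t ^ 6 := by ring
    have h6' : (t ^ 3) ^ 2 = t ^ 6 := by ring
    have := sq_nonneg s
    simp only [cuspNbhd, Set.mem_ofPred_eq, Matrix.cons_val_zero,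
      Matrix.cons_val_one, abs_le]
    constructor <;> linarith
  have htop : r !₂[t ^ 2, t ^ 3] = !₂[t ^ 2, t ^ 3] := hfix _ (by simp [cuspCurve]; ring)
  have hbot : r !₂[t ^ 2, -t ^ 3] = !₂[t ^ 2, -t ^ 3] := hfix _ (by simp [cuspCurve]; ring)
  have hcont : ContinuousOn (fun s : ℝ => r !₂[t ^ 2, s] 1) (Set.Icc (-t ^ 3) (t ^ 3)) := by
    refine (LipschitzOnWith.of_dist_le_mul (K := ⟨K, hK⟩) fun s hs s' hs' => ?_).continuousOn
    have h := hlip _ (hseg s hs) _ (hseg s' hs')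
    rw [dist_vertical] at h
    exact (abs_coord_sub_le_dist _ _ 1).trans h
  obtain ⟨s, hs, hs0⟩ : ∃ s ∈ Set.Icc (-t ^ 3) (t ^ 3), r !₂[t ^ 2, s] 1 = 0 := by
    refine intermediate_value_Icc (by linarith) hcont ⟨?_, ?_⟩
    · simp [hbot, ht3.le]
    · simp [htop, ht3.le]
  have hx0 : r !₂[t ^ 2, s] 0 = 0 := by
    have h : (r !₂[t ^ 2, s] 1) ^ 2 = (r !₂[t ^ 2, s] 0) ^ 3 := hmem _ (hseg s hs)
    rw [hs0, zero_pow two_ne_zero] at h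
    exact pow_eq_zero_iff three_ne_zero |>.mp h.symm
  have h := hlip _ (hseg _ ⟨by linarith, le_rfl⟩) _ (hseg s hs)
  rw [dist_vertical, abs_of_nonneg (by linarith [hs.2])] at h
  have h2 : t ^ 2 ≤ dist (r !₂[t ^ 2, t ^ 3]) (r !₂[t ^ 2, s]) := by
    have := abs_coord_sub_le_dist (r !₂[t ^ 2, t ^ 3]) (r !₂[t ^ 2, s]) 0
    rw [hx0, htop] at this
    rw [htop]
    simpa using this
  have h3 : K * (t ^ 3 - s) ≤ K * (2 * t ^ 3) :=
    mul_le_mul_of_nonneg_left (by linarith [hs.1]) hK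
  have h4 : 2 * K * t * t ^ 2 < 1 * t ^ 2 := mul_lt_mul_of_pos_right htK (by positivity)
  linarith [show K * (2 * t ^ 3) = 2 * K * t * t ^ 2 by ring]
end

section
/- Let X = {(0,0)} ∪ {(x, y) ∈ ℝ² : 0 < |x| ≤ 1 and |y| = exp(−1/x²)} and Y = {(0,0)} ∪ {(x, y) ∈ ℝ² : 0 < |x| ≤ √2 and |y| = exp(−2/x²)}. Then X and Y are bi-Lipschitz homeomorphic: there exists a bijection h : X → Y and a constant K ≥ 0 such that both h and h⁻¹ are K-Lipschitz with respect to the Euclidean distance of ℝ². -/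
/-!
The linear map `(x, y) ↦ (√2 x, y)` does it: since `-2 / (√2 x)² = -1 / x²`, it carries the first
curve onto the second, and both it and its inverse `(x, y) ↦ (x / √2, y)` are 2-Lipschitz on the
whole plane, as is any diagonal map with entries of square at most `4`.
-/

/-- The curve `|y| = exp (-1/x²)`, `0 < |x| ≤ 1`, together with the origin. -/
def flatCurveX : Set (EuclideanSpace ℝ (Fin 2)) :=
  {p | (p 0 = 0 ∧ p 1 = 0) ∨
    (0 < |p 0| ∧ |p 0| ≤ 1 ∧ |p 1| = Real.exp (-1 / (p 0) ^ 2))}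

/-- The curve `|y| = exp (-2/x²)`, `0 < |x| ≤ √2`, together with the origin. -/
def flatCurveY : Set (EuclideanSpace ℝ (Fin 2)) :=
  {p | (p 0 = 0 ∧ p 1 = 0) ∨
    (0 < |p 0| ∧ |p 0| ≤ Real.sqrt 2 ∧ |p 1| = Real.exp (-2 / (p 0) ^ 2))}

/-- A diagonal map `(x, y) ↦ (c x, y)` with `c² ≤ 4` is 2-Lipschitz. -/
lemma dist_scale_le (c : ℝ) (hc : c ^ 2 ≤ 4) (p q : EuclideanSpace ℝ (Fin 2)) :
    dist (!₂[c * p 0, p 1] : EuclideanSpace ℝ (Fin 2)) !₂[c * q 0, q 1] ≤ 2 * dist p q := by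
  rw [EuclideanSpace.dist_eq, EuclideanSpace.dist_eq]
  apply Real.sqrt_le_iff.2
  refine ⟨by positivity, ?_⟩
  rw [mul_pow, Real.sq_sqrt (by positivity)]
  simp only [Fin.sum_univ_two, Real.dist_eq, sq_abs, Matrix.cons_val_zero, Matrix.cons_val_one]
  nlinarith [mul_le_mul_of_nonneg_right hc (sq_nonneg (p 0 - q 0)), sq_nonneg (p 1 - q 1)]

lemma scale_mem_flatCurveY {p : EuclideanSpace ℝ (Fin 2)} (hp : p ∈ flatCurveX) :
    (!₂[√2 * p 0, p 1] : EuclideanSpace ℝ (Fin 2)) ∈ flatCurveY := by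
  have h2 : (0 : ℝ) < √2 := by positivity
  have hs : √2 ^ 2 = (2 : ℝ) := Real.sq_sqrt (by norm_num)
  rcases hp with ⟨h0, h1⟩ | ⟨h0, h1, h⟩
  · left
    simp [h0, h1]
  · right
    simp only [Matrix.cons_val_zero, Matrix.cons_val_one]
    have hx : p 0 ≠ 0 := abs_pos.1 h0
    rw [abs_mul, abs_of_pos h2, h, mul_pow, hs]
    refine ⟨by positivity, by nlinarith, ?_⟩
    congr 1
    field_simp

lemma scale_mem_flatCurveX {p : EuclideanSpace ℝ (Fin 2)} (hp : p ∈ flatCurveY) :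
    (!₂[(√2)⁻¹ * p 0, p 1] : EuclideanSpace ℝ (Fin 2)) ∈ flatCurveX := by
  have h2 : (0 : ℝ) < √2 := by positivity
  have hs : √2 ^ 2 = (2 : ℝ) := Real.sq_sqrt (by norm_num)
  rcases hp with ⟨h0, h1⟩ | ⟨h0, h1, h⟩
  · left
    simp [h0, h1]
  · right
    simp only [Matrix.cons_val_zero, Matrix.cons_val_one]
    have hx : p 0 ≠ 0 := abs_pos.1 h0
    rw [abs_mul, abs_of_pos (inv_pos.2 h2), h, mul_pow, inv_pow, hs]
    refine ⟨by positivity, ?_, ?_⟩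
    · rw [inv_mul_le_iff₀ h2, mul_one]
      exact h1
    · congr 1
      field_simp

/-- The germs `|y| = exp (-1/x²)` and `|y| = exp (-2/x²)` are
bi-Lipschitz homeomorphic. -/
theorem stmt_4 :
    ∃ (h : flatCurveX ≃ flatCurveY) (K : ℝ), 0 ≤ K ∧
      (∀ a b : flatCurveX,
        dist (h a : EuclideanSpace ℝ (Fin 2)) (h b : EuclideanSpace ℝ (Fin 2)) ≤
          K * dist (a : EuclideanSpace ℝ (Fin 2)) (b : EuclideanSpace ℝ (Fin 2))) ∧
      (∀ a b : flatCurveY,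
        dist (h.symm a : EuclideanSpace ℝ (Fin 2)) (h.symm b : EuclideanSpace ℝ (Fin 2)) ≤
          K * dist (a : EuclideanSpace ℝ (Fin 2)) (b : EuclideanSpace ℝ (Fin 2))) := by
  have hs : √2 ^ 2 = (2 : ℝ) := Real.sq_sqrt (by norm_num)
  refine ⟨⟨fun p => ⟨_, scale_mem_flatCurveY p.2⟩, fun p => ⟨_, scale_mem_flatCurveX p.2⟩,
    fun p => ?_, fun p => ?_⟩, 2, by norm_num, fun a b => ?_, fun a b => ?_⟩
  · ext i
    fin_cases i <;> simp
  · ext i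
    fin_cases i <;> simp
  · exact dist_scale_le _ (by rw [hs]; norm_num) _ _
  · exact dist_scale_le _ (by rw [inv_pow, hs]; norm_num) _ _
end

section
/- Let r, s > 0 and let T(r, s) = {x ∈ ℝ⁴ : x₁² + x₂² = r² and x₃² + x₄² = s²}. Let γ : S¹ → T(r, s) be a continuous loop and let p : ℝ⁴ → ℝ² be the projection onto the first two coordinates, so that p ∘ γ is a continuous loop into the circle {(a, b) ∈ ℝ² : a² + b² = r²}. If the loop p ∘ γ is not nullhomotopic in that circle, then the diameter of the image of γ (with respect to the Euclidean distance of ℝ⁴) is at least 2r. -/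
/-! Either `pγ` is surjective or it misses a point of the circle.  A map into the circle that misses
a point `p` is nullhomotopic: the segment from `pγ z` to `-p` avoids the origin, so the straight-line
homotopy to the constant `-p` can be pushed radially back to the circle.  Hence a loop `pγ` that is
not nullhomotopic is surjective, and in particular passes through the antipodal points `(r, 0)` and
`(-r, 0)`.  The corresponding points of `γ` differ by `2 r` in the first coordinate, hence are at
distance at least `2 r`. -/

/-- The torus `x₁² + x₂² = r²`, `x₃² + x₄² = s²` in `ℝ⁴`. -/
def bgTorus (r s : ℝ) : Set (EuclideanSpace ℝ (Fin 4)) :=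
  {x | (x 0) ^ 2 + (x 1) ^ 2 = r ^ 2 ∧ (x 2) ^ 2 + (x 3) ^ 2 = s ^ 2}

/-- The unit circle `S¹ ⊆ ℝ²`. -/
def unitCircle : Set (EuclideanSpace ℝ (Fin 2)) :=
  Metric.sphere (0 : EuclideanSpace ℝ (Fin 2)) 1

/-- The circle of radius `r` centered at the origin in `ℝ²`. -/
def circleOfRadius (r : ℝ) : Set (EuclideanSpace ℝ (Fin 2)) :=
  {a | (a 0) ^ 2 + (a 1) ^ 2 = r ^ 2}

theorem mem_circleOfRadius_iff {r : ℝ} (hr : 0 < r) (a : EuclideanSpace ℝ (Fin 2)) :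
    a ∈ circleOfRadius r ↔ ‖a‖ = r := by
  have h : ‖a‖ ^ 2 = (a 0) ^ 2 + (a 1) ^ 2 := by
    rw [EuclideanSpace.real_norm_sq_eq, Fin.sum_univ_two]
  change (a 0) ^ 2 + (a 1) ^ 2 = r ^ 2 ↔ _
  rw [← h]
  exact sq_eq_sq₀ (norm_nonneg _) hr.le

/-- The segment from `a` to `-b` avoids the origin when `a ≠ b` have the same positive norm. -/
theorem segment_ne_zero {r t : ℝ} (hr : 0 < r) (h0 : 0 ≤ t) (h1 : t ≤ 1)
    {a b : EuclideanSpace ℝ (Fin 2)} (ha : ‖a‖ = r) (hb : ‖b‖ = r) (hab : a ≠ b) :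
    (1 - t) • a - t • b ≠ 0 := by
  intro h
  have h2 : (1 - t) • a = t • b := sub_eq_zero.mp h
  have h3 := congrArg norm h2
  rw [norm_smul, norm_smul, ha, hb, Real.norm_of_nonneg (by linarith), Real.norm_of_nonneg h0] at h3
  have h4 : 1 - t = t := mul_right_cancel₀ hr.ne' h3
  rw [h4] at h2
  have ht : t ≠ 0 := by intro h; linarith
  exact hab (smul_right_injective _ ht h2)

theorem nullhomotopic_of_notMem_range {X : Type*} [TopologicalSpace X] {r : ℝ} (hr : 0 < r)
    (f : C(X, circleOfRadius r)) (p : circleOfRadius r) (hp : p ∉ Set.range f) :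
    f.Nullhomotopic := by
  have hn : ∀ a : circleOfRadius r, ‖(a : EuclideanSpace ℝ (Fin 2))‖ = r :=
    fun a => (mem_circleOfRadius_iff hr _).1 a.2
  let L : unitInterval × X → EuclideanSpace ℝ (Fin 2) :=
    fun y => (1 - (y.1 : ℝ)) • (f y.2 : EuclideanSpace ℝ (Fin 2)) - (y.1 : ℝ) • p.1
  have hL : ∀ y, L y ≠ 0 := fun y =>
    segment_ne_zero hr y.1.2.1 y.1.2.2 (hn _) (hn _)
      fun h => hp ⟨y.2, Subtype.ext h⟩
  have hLc : Continuous L := by fun_prop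
  have hM : ∀ y, (r / ‖L y‖) • L y ∈ circleOfRadius r := fun y => by
    rw [mem_circleOfRadius_iff hr, norm_smul, Real.norm_of_nonneg (by positivity),
      div_mul_cancel₀ _ (norm_ne_zero_iff.2 (hL y))]
  have hc : Continuous fun y => (r / ‖L y‖) • L y :=
    (continuous_const.div hLc.norm fun y => norm_ne_zero_iff.2 (hL y)).smul hLc
  refine ⟨⟨-p.1, (mem_circleOfRadius_iff hr _).2 (by rw [norm_neg, hn])⟩, ⟨?_⟩⟩
  refine ⟨⟨fun y => ⟨(r / ‖L y‖) • L y, hM y⟩, hc.subtype_mk _⟩, fun x => ?_, fun x => ?_⟩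
  · apply Subtype.ext
    simp [L, hn, hr.ne']
  · apply Subtype.ext
    simp [L, hn, hr.ne']

/-- If a loop `γ` in the torus `T(r,s)` projects (by the projection onto
the first two coordinates) to a loop in the circle of radius `r` that is
not nullhomotopic in that circle, then the diameter of the image of `γ`
is at least `2 r`. -/
theorem stmt_5 (r s : ℝ) (hr : 0 < r) (hs : 0 < s)
    (γ : unitCircle → EuclideanSpace ℝ (Fin 4))
    (hγcont : Continuous γ)
    (hγmem : ∀ z, γ z ∈ bgTorus r s)
    (pγ : C(unitCircle, circleOfRadius r))
    (hpγ : ∀ z : unitCircle,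
      ((pγ z : EuclideanSpace ℝ (Fin 2)) 0 = γ z 0) ∧
      ((pγ z : EuclideanSpace ℝ (Fin 2)) 1 = γ z 1))
    (hnontriv : ¬ pγ.Nullhomotopic) :
    2 * r ≤ Metric.diam (Set.range γ) := by
  have hsurj : Function.Surjective pγ := by
    intro p
    by_contra h
    exact hnontriv (nullhomotopic_of_notMem_range hr pγ p h)
  obtain ⟨z, hz⟩ := hsurj ⟨!₂[r, 0], by simp [circleOfRadius]⟩
  obtain ⟨w, hw⟩ := hsurj ⟨!₂[-r, 0], by simp [circleOfRadius]⟩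
  have hz0 : γ z 0 = r := by rw [← (hpγ z).1, hz]; simp
  have hw0 : γ w 0 = -r := by rw [← (hpγ w).1, hw]; simp
  have : CompactSpace unitCircle := isCompact_iff_compactSpace.1 (isCompact_sphere _ _)
  have hb : Bornology.IsBounded (Set.range γ) := (isCompact_range hγcont).isBounded
  calc 2 * r = ‖(γ z - γ w) 0‖ := by
        rw [PiLp.sub_apply, hz0, hw0, Real.norm_of_nonneg (by linarith)]; ring
    _ ≤ ‖γ z - γ w‖ := PiLp.norm_apply_le _ _
    _ = dist (γ z) (γ w) := (dist_eq_norm _ _).symm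
    _ ≤ _ := Metric.dist_le_diam_of_mem hb ⟨z, rfl⟩ ⟨w, rfl⟩
end
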